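/- There exists an element α ∈ K = ℚ(√m) such that α²·ε = 2·ℓ₂. -/

import Mathlib

open NumberField

/-!
Writing `a² - 1 = m b²` as `(a + 1)(a - 1) = m b²` and separating the coprime factors gives
`m = d e` with `d x² - e y² = c`, where `c = 2` if `a` is even and `c = 1` if `a` is odd.
Reducing this equation modulo the primes `ℓⱼ` determines `(d/ℓⱼ)` for `ℓⱼ ∣ e` and `(-e/ℓⱼ)` for
`ℓⱼ ∣ d`, and the prescribed Legendre symbols leave a single solution: `d = 1` if `c = 1`, and
`d = ℓ₂` if `c = 2`. For `c = 1` this makes `(x, y)` a smaller solution of the Pell equation, so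
`a` is even. Then `(d x + y √m)² = 2 ℓ₂ ε`, and `α = (d x + y √m) ε⁻¹` with `ε⁻¹ = a - b √m`.
-/

section Pell

theorem exists_eq_mul_pow_of_coprime_of_mul_eq {u v m b n : ℕ} (hm : 0 < m) (hn : n ≠ 0)
    (hc : u.Coprime v) (h : u * v = m * b ^ n) :
    ∃ d e x y : ℕ, d * e = m ∧ u = d * x ^ n ∧ v = e * y ^ n ∧ b = x * y := by
  obtain ⟨d, e, ⟨u', rfl⟩, ⟨v', rfl⟩, rfl⟩ :=
    exists_dvd_and_dvd_of_dvd_mul (Dvd.intro (b ^ n) h.symm)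
  have huv : u' * v' = b ^ n := Nat.eq_of_mul_eq_mul_left hm (by rw [← h]; ring)
  have hc' : IsUnit (gcd u' v') :=
    Nat.isUnit_iff.mpr (hc.coprime_mul_left.coprime_mul_left_right)
  obtain ⟨x, rfl⟩ := exists_eq_pow_of_mul_eq_pow hc' huv
  obtain ⟨y, rfl⟩ := exists_eq_pow_of_mul_eq_pow (gcd_comm' _ _ |>.isUnit hc')
    ((mul_comm _ _).trans huv)
  exact ⟨d, e, x, y, rfl, rfl, rfl, Nat.pow_left_injective hn (by simp [mul_pow, huv])⟩

theorem exists_mul_sq_eq_add_two_of_pell_of_even {m a b : ℕ} (ha : Even a)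
    (h : a ^ 2 = m * b ^ 2 + 1) :
    ∃ d e x y : ℕ, d * e = m ∧ d * x ^ 2 = e * y ^ 2 + 2 ∧ 2 * a = d * x ^ 2 + e * y ^ 2 ∧
      b = x * y := by
  have ha0 : a ≠ 0 := by rintro rfl; omega
  obtain ⟨v, rfl⟩ := Nat.exists_eq_succ_of_ne_zero ha0
  have hv : Odd v := by simpa [Nat.even_add_one] using ha
  have hm : 0 < m := Nat.pos_of_ne_zero fun hm => hv.pos.ne' (by simpa [hm] using h)
  have hc : (v + 2).Coprime v := by simpa using hv
  obtain ⟨d, e, x, y, hde, hx, hy, hb⟩ :=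
    exists_eq_mul_pow_of_coprime_of_mul_eq (b := b) hm two_ne_zero hc (by linarith)
  exact ⟨d, e, x, y, hde, by omega, by omega, hb⟩

theorem exists_mul_sq_eq_add_one_of_pell_of_odd {m a b : ℕ} (hm : Odd m) (ha : Odd a)
    (h : a ^ 2 = m * b ^ 2 + 1) :
    ∃ d e x y : ℕ, d * e = m ∧ d * x ^ 2 = e * y ^ 2 + 1 ∧ a = d * x ^ 2 + e * y ^ 2 ∧
      b = 2 * (x * y) := by
  have hb : Even b := by
    have hmb : Even (m * b ^ 2) := by simpa [h, Nat.odd_add_one] using ha.pow (n := 2)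
    simpa [Nat.even_mul, Nat.even_pow, Nat.not_even_iff_odd.mpr hm] using hmb
  obtain ⟨k, rfl⟩ := ha
  obtain ⟨t, rfl⟩ := hb.two_dvd
  have hc : (k + 1).Coprime k := by simp
  obtain ⟨d, e, x, y, hde, hx, hy, rfl⟩ :=
    exists_eq_mul_pow_of_coprime_of_mul_eq (b := t) hm.pos two_ne_zero hc (by linarith)
  exact ⟨d, e, x, y, hde, by omega, by omega, rfl⟩

theorem sq_add_mul_eq {R : Type*} [CommRing R] {r d e x y a : R} (hr : r ^ 2 = d * e)
    (ha : 2 * a = d * x ^ 2 + e * y ^ 2) :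
    (d * x + y * r) ^ 2 = 2 * d * (a + x * y * r) := by
  linear_combination y ^ 2 * hr - d * ha

theorem exists_sq_mul_eq_of_sq_eq_mul {R : Type*} [CommRing R] {u v γ c : R} (huv : u * v = 1)
    (hγ : γ ^ 2 = c * u) : ∃ β, β ^ 2 * u = c :=
  ⟨γ * v, by linear_combination v ^ 2 * u * hγ + c * (u * v + 1) * huv⟩

end Pell

section JacobiSymbol

open scoped NumberTheorySymbols

theorem jacobiSym_natCast_prod_left {ι : Type*} (s : Finset ι) (f : ι → ℕ) (b : ℕ) :
    J(((∏ i ∈ s, f i : ℕ) : ℤ) | b) = ∏ i ∈ s, J(f i | b) := by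
  let φ : ℤ →* ℤ := ⟨⟨(J(· | b)), jacobiSym.one_left b⟩, fun a₁ a₂ => jacobiSym.mul_left a₁ a₂ b⟩
  rw [Nat.cast_prod]
  exact map_prod φ (fun i => (f i : ℤ)) s

theorem jacobiSym_eq_of_mul_sq_eq_add {d e x y c : ℤ} {q : ℕ} (h : d * x ^ 2 = e * y ^ 2 + c)
    (hq : (q : ℤ) ∣ e) (hc : J(c | q) ≠ 0) : J(d | q) = J(c | q) := by
  have hmod : c ≡ d * x ^ 2 [ZMOD q] :=
    Int.modEq_iff_dvd.mpr (by simpa [h] using hq.mul_right (y ^ 2))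
  have hdx : J(d | q) * J(x | q) ^ 2 = J(c | q) := by
    rw [← jacobiSym.pow_left, ← jacobiSym.mul_left, jacobiSym.mod_left' hmod]
  rcases jacobiSym.trichotomy x q with hx | hx | hx
  · exact absurd (by simp [← hdx, hx]) hc
  all_goals simpa [hx] using hdx

end JacobiSymbol

theorem exists_finset_prod_eq_of_mul_eq_prod_prime {ι R : Type*} [Fintype ι] [DecidableEq ι]
    [CommMonoidWithZero R] [IsCancelMulZero R] [Subsingleton Rˣ] {l : ι → R}
    (hl : ∀ i, Prime (l i)) {d e : R} (h : d * e = ∏ i, l i) :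
    ∃ D : Finset ι, d = ∏ i ∈ D, l i ∧ e = ∏ i ∈ Dᶜ, l i := by
  obtain ⟨D, E, u, v, hDE, hdisj, huv, rfl, rfl⟩ :=
    mul_eq_mul_prime_prod (s := Finset.univ) (x := d) (y := e) (a := 1) (fun i _ => hl i)
      (by rwa [one_mul])
  obtain rfl : u = 1 := eq_one_of_mul_right huv.symm
  obtain rfl : v = 1 := eq_one_of_mul_left huv.symm
  obtain rfl : E = Dᶜ := (IsCompl.of_eq hdisj.eq_bot hDE).symm.eq_compl
  exact ⟨D, one_mul _, one_mul _⟩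

theorem neg_one_pow_card_compl {ι R : Type*} [Fintype ι] [DecidableEq ι] [Ring R]
    (h : Even (Fintype.card ι)) (A : Finset ι) : (-1 : R) ^ Aᶜ.card = (-1) ^ A.card :=
  neg_one_pow_congr (Nat.even_add.mp (by rwa [add_comm, A.card_add_card_compl]))

/-- The Deng–Li congruence and Legendre symbol conditions on a family of primes `l`, indexed by an
arbitrary type with two distinguished indices: `o` is the index of `ℓ₁`, the prime congruent to `3`
modulo `8`, and `k` that of `ℓ₂`, the only one of the primes modulo which `ℓ₁` is not a square.
The symbols modulo `ℓ₁` are omitted, since quadratic reciprocity determines them. -/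
structure IsDengLiFamily {ι : Type*} (l : ι → ℕ) (o k : ι) : Prop where
  prime : ∀ i, (l i).Prime
  ne : k ≠ o
  mod_eight_eq_three : l o % 8 = 3
  mod_eight_eq_five : ∀ i, i ≠ o → l i % 8 = 5
  jacobiSym_o_k : jacobiSym (l o) (l k) = -1
  jacobiSym_o_of_ne : ∀ j, j ≠ o → j ≠ k → jacobiSym (l o) (l j) = 1
  jacobiSym_of_ne : ∀ i j, i ≠ o → j ≠ o → i ≠ j → jacobiSym (l i) (l j) = -1

namespace IsDengLiFamily

open scoped NumberTheorySymbols

theorem of_fin {n : ℕ} {l : Fin n → ℕ} {o k : Fin n} (ho : (o : ℕ) = 0) (hk : (k : ℕ) = 1)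
    (hlp : ∀ i, (l i).Prime) (hl1 : l o % 8 = 3) (hli : ∀ i, i ≠ o → l i % 8 = 5)
    (hleg12 : J(l o | l k) = -1) (hleg1j : ∀ j : Fin n, 2 ≤ (j : ℕ) → J(l o | l j) = 1)
    (hlegij : ∀ i j : Fin n, 1 ≤ (i : ℕ) → i < j → J(l i | l j) = -1) :
    IsDengLiFamily l o k where
  prime := hlp
  ne h := by simp [h, ho] at hk
  mod_eight_eq_three := hl1
  mod_eight_eq_five := hli
  jacobiSym_o_k := hleg12
  jacobiSym_o_of_ne j hjo hjk := hleg1j j (by omega)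
  jacobiSym_of_ne i j hi hj hij := by
    rcases hij.lt_or_gt with hlt | hgt
    · exact hlegij i j (by omega) hlt
    · have hi4 : l i % 4 = 1 := by have := hli i hi; omega
      have hj2 : Odd (l j) := Nat.odd_iff.mpr (by have := hli j hj; omega)
      rw [jacobiSym.quadratic_reciprocity_one_mod_four hi4 hj2]
      exact hlegij j i (by omega) hgt

variable {ι : Type*} {l : ι → ℕ} {o k : ι}

theorem mod_eight (hl : IsDengLiFamily l o k) (i : ι) : l i % 8 = 3 ∨ l i % 8 = 5 := by
  rcases eq_or_ne i o with rfl | hi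
  · exact .inl hl.mod_eight_eq_three
  · exact .inr (hl.mod_eight_eq_five i hi)

theorem odd (hl : IsDengLiFamily l o k) (i : ι) : Odd (l i) :=
  Nat.odd_iff.mpr (by have := hl.mod_eight i; omega)

theorem jacobiSym_two (hl : IsDengLiFamily l o k) (i : ι) : J(2 | l i) = -1 := by
  rw [jacobiSym.at_two (hl.odd i), ZMod.χ₈_nat_mod_eight]
  rcases hl.mod_eight i with h | h <;> rw [h] <;> rfl

theorem jacobiSym_neg_o (hl : IsDengLiFamily l o k) (a : ℤ) : J(-a | l o) = -J(a | l o) := by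
  have ho : l o % 4 = 3 := by have := hl.mod_eight_eq_three; omega
  rw [jacobiSym.neg a (hl.odd o), ZMod.χ₄_nat_three_mod_four ho, neg_one_mul]

theorem jacobiSym_neg_of_ne (hl : IsDengLiFamily l o k) (a : ℤ) {j : ι} (hj : j ≠ o) :
    J(-a | l j) = J(a | l j) := by
  have hj4 : l j % 4 = 1 := by have := hl.mod_eight_eq_five j hj; omega
  rw [jacobiSym.neg a (hl.odd j), ZMod.χ₄_nat_one_mod_four hj4, one_mul]

theorem jacobiSym_k_o (hl : IsDengLiFamily l o k) : J(l k | l o) = -1 := by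
  have hk4 : l k % 4 = 1 := by have := hl.mod_eight_eq_five k hl.ne; omega
  rw [jacobiSym.quadratic_reciprocity_one_mod_four hk4 (hl.odd o), hl.jacobiSym_o_k]

theorem jacobiSym_prod_k (hl : IsDengLiFamily l o k) {A : Finset ι} (hk : k ∉ A) :
    J(((∏ i ∈ A, l i : ℕ) : ℤ) | l k) = (-1) ^ A.card := by
  rw [jacobiSym_natCast_prod_left]
  refine Finset.prod_eq_pow_card fun i hi => ?_
  rcases eq_or_ne i o with rfl | hio
  · exact hl.jacobiSym_o_k
  · exact hl.jacobiSym_of_ne i k hio hl.ne (ne_of_mem_of_not_mem hi hk)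

theorem jacobiSym_prod_of_mem_o (hl : IsDengLiFamily l o k) {A : Finset ι} {j : ι}
    (ho : o ∈ A) (hj : j ∉ A) (hjk : j ≠ k) :
    J(((∏ i ∈ A, l i : ℕ) : ℤ) | l j) = -(-1) ^ A.card := by
  classical
  have hjo : j ≠ o := (ne_of_mem_of_not_mem ho hj).symm
  have herase : ∏ i ∈ A.erase o, J(l i | l j) = (-1) ^ (A.erase o).card :=
    Finset.prod_eq_pow_card fun i hi => hl.jacobiSym_of_ne i j
      (Finset.ne_of_mem_erase hi) hjo (ne_of_mem_of_not_mem (Finset.mem_of_mem_erase hi) hj)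
  rw [jacobiSym_natCast_prod_left, ← Finset.mul_prod_erase A _ ho, herase,
    hl.jacobiSym_o_of_ne j hjo hjk, ← Finset.card_erase_add_one ho]
  ring

variable [Fintype ι]

theorem eq_empty_or_eq_singleton [DecidableEq ι] (hl : IsDengLiFamily l o k)
    (hι : Even (Fintype.card ι)) {A : Finset ι} {s : ℤ} (ho : o ∉ A)
    (hA : ∀ j ∉ A, j ≠ o → J(((∏ i ∈ A, l i : ℕ) : ℤ) | l j) = s)
    (hAc : ∀ j ∈ A, J(((∏ i ∈ Aᶜ, l i : ℕ) : ℤ) | l j) = s) :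
    s = 1 ∧ A = ∅ ∨ s = -1 ∧ A = {k} := by
  have hcard : (-1) ^ A.card = s := by
    by_cases hk : k ∈ A
    · rw [← hAc k hk, hl.jacobiSym_prod_k (by simpa using hk), neg_one_pow_card_compl hι]
    · rw [← hA k hk hl.ne, hl.jacobiSym_prod_k hk]
  have hsub : A ⊆ {k} := fun j hj => by
    by_contra hjk
    have hneg : s = -s := (hAc j hj).symm.trans (by
      rw [hl.jacobiSym_prod_of_mem_o (by simpa using ho) (by simpa using hj) (by simpa using hjk),
        neg_one_pow_card_compl hι, hcard])
    have hs : s ≠ 0 := hcard ▸ pow_ne_zero _ (by decide)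
    omega
  rcases Finset.subset_singleton_iff.mp hsub with rfl | rfl
  · exact .inl ⟨by simpa using hcard.symm, rfl⟩
  · exact .inr ⟨by simpa using hcard.symm, rfl⟩

theorem eq_one_or_eq_of_mul_sq_eq_add (hl : IsDengLiFamily l o k) (hι : Even (Fintype.card ι))
    {d e x y c : ℕ} {s : ℤ} (hde : d * e = ∏ i, l i) (h : d * x ^ 2 = e * y ^ 2 + c)
    (hs : s ≠ 0) (hc : ∀ i, J(c | l i) = s) :
    s = 1 ∧ d = 1 ∨ s = -1 ∧ d = l k := by
  classical
  obtain ⟨D, hd, he⟩ := exists_finset_prod_eq_of_mul_eq_prod_prime (fun i => (hl.prime i).prime) hde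
  have hz : (d : ℤ) * x ^ 2 = e * y ^ 2 + c := mod_cast h
  have hD : ∀ j ∉ D, J(d | l j) = s := fun j hj => by
    have hdvd : l j ∣ e := he ▸ Finset.dvd_prod_of_mem l (Finset.mem_compl.mpr hj)
    rw [← hc j]
    exact jacobiSym_eq_of_mul_sq_eq_add hz (mod_cast hdvd) (by rwa [hc j])
  have hDc : ∀ j ∈ D, J(-e | l j) = s := fun j hj => by
    have hdvd : l j ∣ d := hd ▸ Finset.dvd_prod_of_mem l hj
    have hz' : -(e : ℤ) * y ^ 2 = -d * x ^ 2 + c := by linarith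
    rw [← hc j]
    exact jacobiSym_eq_of_mul_sq_eq_add hz' (dvd_neg.mpr (mod_cast hdvd)) (by rwa [hc j])
  by_cases ho : o ∈ D
  · have hE := hl.eq_empty_or_eq_singleton hι (A := Dᶜ) (by simpa using ho)
      (fun j hj hjo => by
        rw [← he, ← hl.jacobiSym_neg_of_ne _ hjo, hDc j (by simpa using hj)])
      (fun j hj => by rw [compl_compl, ← hd, hD j (by simpa using hj)])
    have hs' : -J(e | l o) = s := by rw [← hl.jacobiSym_neg_o, hDc o ho]
    rcases hE with ⟨rfl, hE⟩ | ⟨rfl, hE⟩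
    · simp [he, hE] at hs'
    · simp [he, hE, hl.jacobiSym_k_o] at hs'
  · have hDk := hl.eq_empty_or_eq_singleton hι ho (fun j hj _ => by rw [← hd, hD j hj])
      (fun j hj => by
        rw [← he, ← hl.jacobiSym_neg_of_ne _ (ne_of_mem_of_not_mem hj ho), hDc j hj])
    exact hDk.imp (And.imp_right fun h => by simp [hd, h]) (And.imp_right fun h => by simp [hd, h])

theorem eq_one_of_mul_sq_eq_add_one (hl : IsDengLiFamily l o k) (hι : Even (Fintype.card ι))
    {d e x y : ℕ} (hde : d * e = ∏ i, l i) (h : d * x ^ 2 = e * y ^ 2 + 1) : d = 1 := by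
  simpa using hl.eq_one_or_eq_of_mul_sq_eq_add hι hde h one_ne_zero fun i => by simp

theorem eq_of_mul_sq_eq_add_two (hl : IsDengLiFamily l o k) (hι : Even (Fintype.card ι))
    {d e x y : ℕ} (hde : d * e = ∏ i, l i) (h : d * x ^ 2 = e * y ^ 2 + 2) : d = l k := by
  simpa using hl.eq_one_or_eq_of_mul_sq_eq_add hι hde h (neg_ne_zero.mpr one_ne_zero)
    hl.jacobiSym_two

theorem even_of_pell_minimal (hl : IsDengLiFamily l o k) (hι : Even (Fintype.card ι)) {a b : ℕ}
    (hb : 0 < b) (hpell : a ^ 2 = (∏ i, l i) * b ^ 2 + 1)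
    (hmin : ∀ a' b' : ℕ, 0 < a' → 0 < b' → a' ^ 2 = (∏ i, l i) * b' ^ 2 + 1 → a ≤ a') :
    Even a := by
  by_contra ha
  have hm : Odd (∏ i, l i) := Finset.prod_induction l Odd (fun _ _ => Odd.mul) odd_one
    fun i _ => hl.odd i
  obtain ⟨d, e, x, y, hde, hxy, rfl, rfl⟩ :=
    exists_mul_sq_eq_add_one_of_pell_of_odd hm (Nat.not_even_iff_odd.mp ha) hpell
  obtain rfl := hl.eq_one_of_mul_sq_eq_add_one hι hde hxy
  rw [one_mul] at hde hxy
  obtain ⟨hx, hy⟩ : 0 < x ∧ 0 < y := by simpa [Nat.pos_iff_ne_zero] using hb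
  have hle := hmin x y hx hy (by rw [← hde, hxy])
  have he : 0 < e := hde ▸ hm.pos
  have hey : 0 < e * y ^ 2 := by positivity
  have hxx : x ≤ x ^ 2 := Nat.le_self_pow two_ne_zero x
  omega

end IsDengLiFamily

theorem dengLi_kummer_relation_general {ι : Type*} [Fintype ι] {l : ι → ℕ} {o k : ι}
    (hl : IsDengLiFamily l o k) (hι : Even (Fintype.card ι)) {a b : ℕ} (hb : 0 < b)
    (hpell : a ^ 2 = (∏ i, l i) * b ^ 2 + 1)
    (hmin : ∀ a' b' : ℕ, 0 < a' → 0 < b' → a' ^ 2 = (∏ i, l i) * b' ^ 2 + 1 → a ≤ a')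
    {R : Type*} [CommRing R] {r : R} (hr : r ^ 2 = (∏ i, l i : ℕ)) :
    ∃ β : R, β ^ 2 * (a + b * r) = 2 * l k := by
  have ha : Even a := hl.even_of_pell_minimal hι hb hpell hmin
  obtain ⟨d, e, x, y, hde, hxy, h2a, hbxy⟩ := exists_mul_sq_eq_add_two_of_pell_of_even ha hpell
  obtain rfl : d = l k := hl.eq_of_mul_sq_eq_add_two hι hde hxy
  have hunit : (a + b * r) * (a - b * r) = 1 := by
    have hpell' : (a : R) ^ 2 = (∏ i, l i : ℕ) * b ^ 2 + 1 := mod_cast congrArg Nat.cast hpell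
    linear_combination hpell' - (b : R) ^ 2 * hr
  have hsq : (l k * x + y * r) ^ 2 = 2 * l k * (a + b * r) := by
    rw [hbxy, Nat.cast_mul]
    exact sq_add_mul_eq (e := (e : R)) (by rw [hr, ← hde, Nat.cast_mul])
      (mod_cast congrArg Nat.cast h2a)
  exact exists_sq_mul_eq_of_sq_eq_mul hunit hsq

/-- **Deng–Li family: the Kummer relation `√2·√ℓ₂ = α·√ε`.** There exists `α ∈ K = ℚ(√m)`
with `α²·ε = 2·ℓ₂`, where `ε = a + b√m` is the fundamental unit. -/
theorem dengLi_kummer_relation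
    (n : ℕ) (hn : 2 ≤ n) (hneven : Even n)
    (l : Fin n → ℕ) (hlp : ∀ i, (l i).Prime) (hlinj : Function.Injective l)
    (hl1 : l ⟨0, by omega⟩ % 8 = 3)
    (hli : ∀ i : Fin n, i ≠ ⟨0, by omega⟩ → l i % 8 = 5)
    (hleg12 : jacobiSym (l ⟨0, by omega⟩ : ℤ) (l ⟨1, by omega⟩) = -1)
    (hleg1j : ∀ j : Fin n, 2 ≤ (j : ℕ) → jacobiSym (l ⟨0, by omega⟩ : ℤ) (l j) = 1)
    (hlegij : ∀ i j : Fin n, 1 ≤ (i : ℕ) → i < j → jacobiSym (l i : ℤ) (l j) = -1)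
    (m : ℕ) (hm : m = ∏ i, l i)
    (K : Type) [Field K] [NumberField K] (hdeg : Module.finrank ℚ K = 2)
    (α : 𝓞 K) (hα : α ^ 2 = (m : 𝓞 K)) (hgen : Algebra.adjoin ℤ {α} = ⊤)
    (a b : ℕ) (ha : 0 < a) (hb : 0 < b) (hpell : a ^ 2 = m * b ^ 2 + 1)
    (hmin : ∀ a' b' : ℕ, 0 < a' → 0 < b' → a' ^ 2 = m * b' ^ 2 + 1 → a ≤ a') :
    ∃ β : K, β ^ 2 * ((a : K) + (b : K) * algebraMap (𝓞 K) K α)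
      = 2 * ((l ⟨1, by omega⟩ : ℕ) : K) := by
  subst hm
  exact dengLi_kummer_relation_general (.of_fin rfl rfl hlp hl1 hli hleg12 hleg1j hlegij)
    (by rwa [Fintype.card_fin]) hb hpell hmin (by rw [← map_pow, hα, map_natCast])
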